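/- A function f from the arcs of the split network to ℕ is a feasible integer flow if and only if there exist directed paths p_1, …, p_k in E, with p_s from v_s to τ, whose vertex sets are pairwise disjoint apart from the common endpoint τ, such that f((i,IN)→(i,OUT)) = 1 exactly when i lies on some p_s; f((i,OUT)→(j,IN)) = 1 exactly when (i,j) is a consecutive pair of some p_s; f((i,OUT)→τ) = 1 exactly when (i,τ) is a consecutive pair of some p_s; and f takes the value 0 on all other arcs. (Observation 1: after splitting each node into an In node and an Out node joined by an arc of capacity 1, the single-ship-type repositioning problem without product flow is a pure network flow problem whose integer flows are exactly the node-distinct systems of one path per ship.) -/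

import Mathlib

open scoped Classical

/-- `l` is a directed path (as a list of vertices) from `a` to `t` in the digraph `E`:
a nonempty finite sequence starting at `a`, ending at `t`, with consecutive pairs
related by `E`. -/
def IsPathTo {V : Type*} (E : V → V → Prop) (a t : V) (l : List V) : Prop :=
  l.head? = some a ∧ l.getLast? = some t ∧ l.Chain' E

/-- The arcs of the split network: each vertex `i ≠ τ` is split into an In node and an
Out node joined by a split arc; each arc `E i j` with `i, j ≠ τ` gives an arc from
`(i, OUT)` to `(j, IN)`; and each arc `E i τ` gives an arc from `(i, OUT)` to `τ`. -/
inductive SplitArc (V : Type*) (E : V → V → Prop) (τ : V) : Type _ where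
  | split (i : V) (hi : i ≠ τ) : SplitArc V E τ
  | move (i j : V) (hij : E i j) (hi : i ≠ τ) (hj : j ≠ τ) : SplitArc V E τ
  | toSink (i : V) (hiτ : E i τ) (hi : i ≠ τ) : SplitArc V E τ

/-- Flow on the split arc of `i` (zero if there is no such arc). -/
noncomputable def splitFlow {V : Type*} (E : V → V → Prop) (τ : V)
    (f : SplitArc V E τ → ℕ) (i : V) : ℕ :=
  if h : i ≠ τ then f (.split i h) else 0

/-- Flow on the arc from `(i, OUT)` to `(j, IN)` (zero if there is no such arc). -/
noncomputable def moveFlow {V : Type*} (E : V → V → Prop) (τ : V)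
    (f : SplitArc V E τ → ℕ) (i j : V) : ℕ :=
  if h : E i j ∧ i ≠ τ ∧ j ≠ τ then f (.move i j h.1 h.2.1 h.2.2) else 0

/-- Flow on the arc from `(i, OUT)` to the sink `τ` (zero if there is no such arc). -/
noncomputable def sinkFlow {V : Type*} (E : V → V → Prop) (τ : V)
    (f : SplitArc V E τ → ℕ) (i : V) : ℕ :=
  if h : E i τ ∧ i ≠ τ then f (.toSink i h.1 h.2) else 0

/-- `f` is a feasible integer flow in the split network: at most one unit on every
split arc; at any In node `(j, IN)` the outflow (the split arc of `j`) equals the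
inflow plus `1` if `j` is one of the sources `v s` (and just the inflow otherwise);
at any Out node `(i, OUT)` the outflow equals the inflow; at `τ` the inflow minus the
(zero) outflow equals `k`. -/
noncomputable def IsFeasibleFlow {V : Type*} [Fintype V] (E : V → V → Prop) (τ : V)
    (k : ℕ) (v : Fin k → V) (f : SplitArc V E τ → ℕ) : Prop :=
  (∀ (i : V) (hi : i ≠ τ), f (.split i hi) ≤ 1) ∧
  (∀ j : V, j ≠ τ →
    splitFlow E τ f j =
      (∑ i : V, moveFlow E τ f i j) + (if ∃ s, v s = j then 1 else 0)) ∧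
  (∀ i : V, i ≠ τ →
    (∑ j : V, moveFlow E τ f i j) + sinkFlow E τ f i = splitFlow E τ f i) ∧
  ((∑ i : V, sinkFlow E τ f i) = k)

/-!
The unit capacity of the split arcs bounds every flow value by one, so a feasible flow is the
indicator of the set of arcs it uses. Conservation says that an active vertex other than `τ` has
exactly one successor and, unless it is a source, exactly one predecessor. By acyclicity, following
successors ends in `τ` and following predecessors ends in a source, so the arcs in use form one path
per source, and two of these paths can only meet in `τ`. Summing conservation over all vertices
shows that the inflow at `τ` counts the distinct sources: this yields the balance at `τ` for a path
system, and it forces the sources of a feasible flow to be distinct.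
-/

section InfixPair

variable {V : Type*} {l : List V} {x y z : V}

theorem exists_infix_pair_of_mem_of_ne_getLast {t : V} (ht : l.getLast? = some t) (hx : x ∈ l)
    (hxt : x ≠ t) : ∃ y, [x, y] <:+: l := by
  obtain ⟨l₁, l₂, rfl⟩ := List.append_of_mem hx
  cases l₂ with
  | nil => simp_all
  | cons y l₂ => exact ⟨y, l₁, l₂, by simp⟩

theorem exists_infix_pair_of_mem_of_ne_head {a : V} (ha : l.head? = some a) (hx : x ∈ l)
    (hxa : x ≠ a) : ∃ y, [y, x] <:+: l := by
  obtain ⟨y, hy⟩ := exists_infix_pair_of_mem_of_ne_getLast (l := l.reverse) (by simpa using ha)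
    (by simpa using hx) hxa
  exact ⟨y, by simpa using List.reverse_infix.2 hy⟩

theorem right_eq_of_infix_pair (hl : l.Nodup) (hy : [x, y] <:+: l) (hz : [x, z] <:+: l) :
    y = z := by
  obtain ⟨l₁, l₂, rfl⟩ := hy
  obtain ⟨m₁, m₂, hm⟩ := hz
  have hx : x ∉ l₁ ++ y :: l₂ :=
    (List.nodup_cons.1 (List.nodup_middle.1 (by simpa using hl))).1
  have hsplit : l₁ ++ x :: y :: l₂ = m₁ ++ x :: z :: m₂ := by simpa using hm.symm
  rw [List.append_cons_inj_of_notMem (by simp_all) (by simp_all)] at hsplit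
  exact (List.cons.inj hsplit.2.2).1

theorem left_eq_of_infix_pair (hl : l.Nodup) (hy : [y, x] <:+: l) (hz : [z, x] <:+: l) :
    y = z :=
  right_eq_of_infix_pair (List.nodup_reverse.2 hl) (List.reverse_infix.2 hy)
    (List.reverse_infix.2 hz)

theorem not_infix_pair_head (hl : l.Nodup) {a : V} (ha : l.head? = some a) :
    ¬ [x, a] <:+: l := by
  rintro ⟨l₁, l₂, rfl⟩
  cases l₁ <;> simp_all

theorem not_infix_pair_getLast (hl : l.Nodup) {t : V} (ht : l.getLast? = some t) :
    ¬ [t, y] <:+: l := fun h =>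
  not_infix_pair_head (List.nodup_reverse.2 hl) (by simpa using ht) (List.reverse_infix.2 h)

end InfixPair

section Acyclic

variable {V : Type*} {R : V → V → Prop}

theorem wellFounded_of_irrefl_transGen [Finite V] (_ : Std.Irrefl (Relation.TransGen R)) :
    WellFounded R :=
  (Finite.wellFounded_of_trans_of_irrefl (Relation.TransGen R)).mono fun _ _ => .single

theorem irrefl_transGen_of_le {F : V → V → Prop} (hFR : F ≤ R)
    (hR : Std.Irrefl (Relation.TransGen R)) : Std.Irrefl (Relation.TransGen F) :=
  ⟨fun x h => hR.irrefl x (Relation.TransGen.mono hFR x x h)⟩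

theorem irrefl_transGen_swap (hR : Std.Irrefl (Relation.TransGen R)) :
    Std.Irrefl (Relation.TransGen (Function.swap R)) :=
  ⟨fun x h => hR.irrefl x (Relation.transGen_swap.1 h)⟩

theorem nodup_of_isChain (_ : Std.Irrefl (Relation.TransGen R)) {l : List V}
    (hl : l.IsChain R) : l.Nodup :=
  (List.isChain_iff_pairwise.1 (hl.imp fun _ _ => Relation.TransGen.single)).nodup

end Acyclic

namespace IsPathTo

variable {V : Type*} {R E : V → V → Prop} {a t x y : V} {l : List V}

theorem isChain (hl : IsPathTo R a t l) : l.IsChain R := hl.2.2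

theorem mono (hRE : R ≤ E) (hl : IsPathTo R a t l) : IsPathTo E a t l :=
  ⟨hl.1, hl.2.1, hl.isChain.imp hRE⟩

theorem start_mem (hl : IsPathTo R a t l) : a ∈ l := List.mem_of_head? hl.1

theorem rel_of_infix (hl : IsPathTo R a t l) (h : [x, y] <:+: l) : R x y := by
  simpa using hl.isChain.infix h

theorem reflTransGen_of_mem (hl : IsPathTo R a t l) (hx : x ∈ l) : Relation.ReflTransGen R a x :=
  hl.isChain.induction (Relation.ReflTransGen R a) l (fun _ _ h ha => ha.tail h)
    (fun hne => by rw [(List.head_eq_iff_head?_eq_some hne).2 hl.1]) x hx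

theorem mem_of_reflTransGen (hR : Relator.RightUnique R) (ht : ∀ y, ¬ R t y)
    (hl : IsPathTo R a t l) (hx : Relation.ReflTransGen R a x) : x ∈ l := by
  induction hx with
  | refl => exact hl.start_mem
  | @tail b c _ hbc hb =>
    obtain ⟨d, hbd⟩ := exists_infix_pair_of_mem_of_ne_getLast hl.2.1 hb
      (by rintro rfl; exact ht c hbc)
    rw [hR hbc (hl.rel_of_infix hbd)]
    exact hbd.subset (by simp)

theorem exists_of_reflTransGen (h : Relation.ReflTransGen R a t) : ∃ l, IsPathTo R a t l := by
  obtain ⟨l, hl, ht⟩ := List.exists_isChain_cons_of_relationReflTransGen h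
  exact ⟨a :: l, rfl, by rw [← ht, List.getLast?_eq_some_getLast], hl⟩

end IsPathTo

/-- A system of directed paths, one from each source `v s` to the common end `τ`, that pairwise
meet in `τ` only. -/
structure IsPathSystem {ι V : Type*} (E : V → V → Prop) (τ : V) (v : ι → V)
    (p : ι → List V) : Prop where
  isPathTo : ∀ s, IsPathTo E (v s) τ (p s)
  eq_end_of_mem : ∀ s t, s ≠ t → ∀ x, x ∈ p s → x ∈ p t → x = τ

/-- The arcs traversed by a family of vertex sequences. -/
def PathArc {ι V : Type*} (p : ι → List V) (x y : V) : Prop := ∃ s, [x, y] <:+: p s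

/-- `F` is the set of arcs carrying flow when the vertices of `S` send one unit each to `τ` and
every vertex other than `τ` carries at most one unit. The vertices carrying a unit are those with
an outgoing arc of `F`. -/
structure IsUnitFlow {V : Type*} (S : Set V) (τ : V) (F : V → V → Prop) : Prop where
  rightUnique : Relator.RightUnique F
  left_unique : ∀ ⦃x y z⦄, z ≠ τ → F x z → F y z → x = y
  not_rel_end : ∀ y, ¬ F τ y
  exists_rel_of_source : ∀ x ∈ S, ∃ y, F x y
  exists_rel_left_iff : ∀ y, y ≠ τ → ((∃ x, F x y) ↔ y ∉ S ∧ ∃ z, F y z)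

namespace IsUnitFlow

variable {V : Type*} {S : Set V} {τ : V} {F : V → V → Prop} {a b x y : V}

theorem ne_end (hF : IsUnitFlow S τ F) (h : F x y) : x ≠ τ := by
  rintro rfl
  exact hF.not_rel_end y h

theorem not_rel_source (hF : IsUnitFlow S τ F) (ha : a ∈ S) : ¬ F x a := fun h =>
  have haτ : a ≠ τ := (hF.exists_rel_of_source a ha).elim fun _ => hF.ne_end
  ((hF.exists_rel_left_iff a haτ).1 ⟨x, h⟩).1 ha

theorem reflTransGen_end (hF : IsUnitFlow S τ F) (hwf : WellFounded (Function.swap F))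
    (hxy : F x y) : Relation.ReflTransGen F x τ := by
  induction x using hwf.induction generalizing y with
  | _ x ih =>
    rcases eq_or_ne y τ with rfl | hy
    · exact .single hxy
    · obtain ⟨z, hyz⟩ := ((hF.exists_rel_left_iff y hy).1 ⟨x, hxy⟩).2
      exact (ih y hxy hyz).head hxy

theorem exists_source_reflTransGen (hF : IsUnitFlow S τ F) (hwf : WellFounded F) (hxy : F x y) :
    ∃ a ∈ S, Relation.ReflTransGen F a x := by
  induction x using hwf.induction generalizing y with
  | _ x ih =>
    by_cases hx : x ∈ S
    · exact ⟨x, hx, .refl⟩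
    · obtain ⟨z, hzx⟩ := (hF.exists_rel_left_iff x (hF.ne_end hxy)).2 ⟨hx, y, hxy⟩
      obtain ⟨a, ha, haz⟩ := ih z hzx hzx
      exact ⟨a, ha, haz.tail hzx⟩

theorem source_eq_of_reflTransGen (hF : IsUnitFlow S τ F) (ha : a ∈ S) (hb : b ∈ S) (hx : x ≠ τ)
    (hax : Relation.ReflTransGen F a x) (hbx : Relation.ReflTransGen F b x) : a = b := by
  induction hax with
  | refl =>
    rcases hbx.cases_tail with hab | ⟨c, -, hca⟩
    · exact hab
    · exact absurd hca (hF.not_rel_source ha)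
  | tail _ hyx ih =>
    rcases hbx.cases_tail with rfl | ⟨c, hbc, hcx⟩
    · exact absurd hyx (hF.not_rel_source hb)
    · obtain rfl := hF.left_unique hx hyx hcx
      exact ih (hF.ne_end hyx) hbc

theorem exists_isPathSystem [Finite V] {ι : Type*} {v : ι → V} (hv : Function.Injective v)
    (hF : IsUnitFlow (Set.range v) τ F) (hacyc : Std.Irrefl (Relation.TransGen F)) :
    ∃ p, IsPathSystem F τ v p ∧ PathArc p = F := by
  have hpath (s : ι) : ∃ l, IsPathTo F (v s) τ l := by
    obtain ⟨y, hy⟩ := hF.exists_rel_of_source (v s) ⟨s, rfl⟩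
    exact IsPathTo.exists_of_reflTransGen
      (hF.reflTransGen_end (wellFounded_of_irrefl_transGen (irrefl_transGen_swap hacyc)) hy)
  choose p hp using hpath
  refine ⟨p, ⟨hp, fun s t hst x hxs hxt => ?_⟩, ?_⟩
  · by_contra hx
    exact hst (hv (hF.source_eq_of_reflTransGen ⟨s, rfl⟩ ⟨t, rfl⟩ hx
      ((hp s).reflTransGen_of_mem hxs) ((hp t).reflTransGen_of_mem hxt)))
  · ext x y
    refine ⟨fun ⟨s, hs⟩ => (hp s).rel_of_infix hs, fun hxy => ?_⟩
    obtain ⟨_, ⟨s, rfl⟩, hsx⟩ :=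
      hF.exists_source_reflTransGen (wellFounded_of_irrefl_transGen hacyc) hxy
    have hx : x ∈ p s := (hp s).mem_of_reflTransGen hF.rightUnique hF.not_rel_end hsx
    obtain ⟨z, hxz⟩ := exists_infix_pair_of_mem_of_ne_getLast (hp s).2.1 hx (hF.ne_end hxy)
    obtain rfl := hF.rightUnique hxy ((hp s).rel_of_infix hxz)
    exact ⟨s, hxz⟩

end IsUnitFlow

namespace IsPathSystem

variable {ι V : Type*} {E : V → V → Prop} {τ : V} {v : ι → V} {p : ι → List V} {x y : V}

theorem mono {F : V → V → Prop} (hFE : F ≤ E) (hp : IsPathSystem F τ v p) :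
    IsPathSystem E τ v p :=
  ⟨fun s => (hp.isPathTo s).mono hFE, hp.eq_end_of_mem⟩

theorem rel_of_pathArc (hp : IsPathSystem E τ v p) (h : PathArc p x y) : E x y :=
  h.elim fun s => (hp.isPathTo s).rel_of_infix

theorem index_eq_of_mem (hp : IsPathSystem E τ v p) (hx : x ≠ τ) {s t : ι} (hs : x ∈ p s)
    (ht : x ∈ p t) : s = t :=
  not_imp_comm.1 (fun hst => hp.eq_end_of_mem s t hst x hs ht) hx

theorem injective_of_ne_end (hp : IsPathSystem E τ v p) (hv : ∀ s, v s ≠ τ) :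
    Function.Injective v := fun s t hst =>
  hp.index_eq_of_mem (hv s) (hp.isPathTo s).start_mem (hst ▸ (hp.isPathTo t).start_mem)

theorem exists_pathArc_iff (hp : IsPathSystem E τ v p) (hx : x ≠ τ) :
    (∃ y, PathArc p x y) ↔ ∃ s, x ∈ p s := by
  constructor
  · rintro ⟨y, s, h⟩
    exact ⟨s, h.subset (by simp)⟩
  · rintro ⟨s, h⟩
    obtain ⟨y, hy⟩ := exists_infix_pair_of_mem_of_ne_getLast (hp.isPathTo s).2.1 h hx
    exact ⟨y, s, hy⟩

theorem exists_pathArc_left_iff (hp : IsPathSystem E τ v p)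
    (hE : Std.Irrefl (Relation.TransGen E)) (hy : y ≠ τ) :
    (∃ x, PathArc p x y) ↔ y ∉ Set.range v ∧ ∃ s, y ∈ p s := by
  constructor
  · rintro ⟨x, s, h⟩
    have hys : y ∈ p s := h.subset (by simp)
    refine ⟨?_, s, hys⟩
    rintro ⟨t, rfl⟩
    obtain rfl := hp.index_eq_of_mem hy hys (hp.isPathTo t).start_mem
    exact not_infix_pair_head (nodup_of_isChain hE (hp.isPathTo s).isChain) (hp.isPathTo s).1 h
  · rintro ⟨hyv, s, h⟩
    obtain ⟨x, hx⟩ := exists_infix_pair_of_mem_of_ne_head (hp.isPathTo s).1 h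
      fun h => hyv ⟨s, h.symm⟩
    exact ⟨x, s, hx⟩

theorem isUnitFlow (hp : IsPathSystem E τ v p) (hE : Std.Irrefl (Relation.TransGen E))
    (hv : ∀ s, v s ≠ τ) : IsUnitFlow (Set.range v) τ (PathArc p) := by
  have hnodup (s : ι) : (p s).Nodup := nodup_of_isChain hE (hp.isPathTo s).isChain
  have hend (y : V) : ¬ PathArc p τ y := fun ⟨s, h⟩ =>
    not_infix_pair_getLast (hnodup s) (hp.isPathTo s).2.1 h
  refine ⟨?_, ?_, hend, ?_, ?_⟩
  · rintro x y z ⟨s, hs⟩ ⟨t, ht⟩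
    have hx : x ≠ τ := by
      rintro rfl
      exact hend y ⟨s, hs⟩
    obtain rfl := hp.index_eq_of_mem hx (hs.subset (by simp)) (ht.subset (by simp))
    exact right_eq_of_infix_pair (hnodup s) hs ht
  · rintro x y z hz ⟨s, hs⟩ ⟨t, ht⟩
    obtain rfl := hp.index_eq_of_mem hz (hs.subset (by simp)) (ht.subset (by simp))
    exact left_eq_of_infix_pair (hnodup s) hs ht
  · rintro _ ⟨s, rfl⟩
    exact (hp.exists_pathArc_iff (hv s)).2 ⟨s, (hp.isPathTo s).start_mem⟩
  · intro y hy
    rw [hp.exists_pathArc_iff hy, hp.exists_pathArc_left_iff hE hy]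

end IsPathSystem

section SplitNetwork

variable {V : Type*} {E : V → V → Prop} {τ : V} {f : SplitArc V E τ → ℕ} {x y : V}

/-- The flow out of `(x, OUT)` along the arc of the split network that comes from the arc
`x → y` of `E`, whether it ends in `(y, IN)` or in `τ` (zero if there is no such arc). -/
noncomputable def arcFlow (E : V → V → Prop) (τ : V) (f : SplitArc V E τ → ℕ) (x y : V) : ℕ :=
  if y = τ then sinkFlow E τ f x else moveFlow E τ f x y

theorem arcFlow_end : arcFlow E τ f x τ = sinkFlow E τ f x := if_pos rfl

theorem arcFlow_of_ne (hy : y ≠ τ) : arcFlow E τ f x y = moveFlow E τ f x y := if_neg hy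

theorem rel_of_arcFlow_ne_zero (h : arcFlow E τ f x y ≠ 0) : E x y ∧ x ≠ τ := by
  unfold arcFlow sinkFlow moveFlow at h
  split_ifs at h <;> simp_all

theorem sum_arcFlow [Fintype V] (x : V) :
    ∑ y, arcFlow E τ f x y = ∑ y, moveFlow E τ f x y + sinkFlow E τ f x := by
  have harc (y : V) :
      arcFlow E τ f x y = moveFlow E τ f x y + if y = τ then sinkFlow E τ f x else 0 := by
    rcases eq_or_ne y τ with rfl | hy
    · simp [arcFlow_end, moveFlow]
    · simp [arcFlow_of_ne hy, hy]
  simp [harc, Finset.sum_add_distrib]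

/-- `f` is the indicator function, on the arcs of the split network, of a set `F` of arcs of `E`
together with the split arcs of the vertices that `F` leaves. -/
structure IsIndicatorFlow (F : V → V → Prop) (f : SplitArc V E τ → ℕ) : Prop where
  le_rel : F ≤ E
  split : ∀ i hi, f (.split i hi) = if ∃ j, F i j then 1 else 0
  move : ∀ i j hij hi hj, f (.move i j hij hi hj) = if F i j then 1 else 0
  toSink : ∀ i hiτ hi, f (.toSink i hiτ hi) = if F i τ then 1 else 0

namespace IsIndicatorFlow

variable {F : V → V → Prop}

theorem splitFlow_eq (hf : IsIndicatorFlow F f) (hx : x ≠ τ) :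
    splitFlow E τ f x = if ∃ y, F x y then 1 else 0 := by
  rw [splitFlow, dif_pos hx, hf.split]

theorem arcFlow_eq (hf : IsIndicatorFlow F f) (hτ : ∀ y, ¬ F τ y) :
    arcFlow E τ f x y = if F x y then 1 else 0 := by
  have hF : F x y → E x y ∧ x ≠ τ := fun h => ⟨hf.le_rel x y h, by rintro rfl; exact hτ y h⟩
  unfold arcFlow sinkFlow moveFlow
  split_ifs <;> simp_all [hf.move, hf.toSink]

end IsIndicatorFlow

theorem IsPathSystem.isIndicatorFlow_iff {k : ℕ} {v : Fin k → V} {p : Fin k → List V}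
    (hp : IsPathSystem E τ v p) :
    IsIndicatorFlow (PathArc p) f ↔
      (∀ i hi, f (.split i hi) = if ∃ s, i ∈ p s then 1 else 0) ∧
      (∀ i j hij hi hj, f (.move i j hij hi hj) = if ∃ s, [i, j] <:+: p s then 1 else 0) ∧
      (∀ i hiτ hi, f (.toSink i hiτ hi) = if ∃ s, [i, τ] <:+: p s then 1 else 0) := by
  constructor
  · exact fun hf =>
      ⟨fun i hi => (hf.split i hi).trans (if_congr (hp.exists_pathArc_iff hi) rfl rfl),
        fun i j hij hi hj => (hf.move i j hij hi hj).trans (if_congr Iff.rfl rfl rfl),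
        fun i hiτ hi => (hf.toSink i hiτ hi).trans (if_congr Iff.rfl rfl rfl)⟩
  · exact fun ⟨hsplit, hmove, hsink⟩ =>
      ⟨fun _ _ => hp.rel_of_pathArc,
        fun i hi => (hsplit i hi).trans (if_congr (hp.exists_pathArc_iff hi).symm rfl rfl),
        fun i j hij hi hj => (hmove i j hij hi hj).trans (if_congr Iff.rfl rfl rfl),
        fun i hiτ hi => (hsink i hiτ hi).trans (if_congr Iff.rfl rfl rfl)⟩

variable [Fintype V]

theorem sum_sinkFlow_eq_card_image {ι : Type*} [Fintype ι] {v : ι → V}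
    [DecidablePred fun j => ∃ s, v s = j] (hv : ∀ s, v s ≠ τ)
    (hin : ∀ j, j ≠ τ → splitFlow E τ f j =
      (∑ i, moveFlow E τ f i j) + (if ∃ s, v s = j then 1 else 0))
    (hout : ∀ i, i ≠ τ → (∑ j, moveFlow E τ f i j) + sinkFlow E τ f i = splitFlow E τ f i) :
    ∑ i, sinkFlow E τ f i = (Finset.univ.image v).card := by
  have hout' (i : V) : (∑ j, moveFlow E τ f i j) + sinkFlow E τ f i = splitFlow E τ f i := by
    rcases eq_or_ne i τ with rfl | hi
    · simp [moveFlow, sinkFlow, splitFlow]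
    · exact hout i hi
  have hin' (j : V) : splitFlow E τ f j =
      (∑ i, moveFlow E τ f i j) + (if ∃ s, v s = j then 1 else 0) := by
    rcases eq_or_ne j τ with rfl | hj
    · simp [moveFlow, splitFlow, hv]
    · exact hin j hj
  have hsources : ∑ j, (if ∃ s, v s = j then 1 else 0) = (Finset.univ.image v).card := by
    rw [← Finset.card_filter]
    congr 1
    ext
    simp
  have hbalance : (∑ i, ∑ j, moveFlow E τ f i j) + ∑ i, sinkFlow E τ f i =
      (∑ i, ∑ j, moveFlow E τ f i j) + (Finset.univ.image v).card := calc
    _ = ∑ i, splitFlow E τ f i := by simp only [← hout', Finset.sum_add_distrib]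
    _ = _ := by
      rw [Finset.sum_comm, ← hsources, ← Finset.sum_add_distrib]
      exact Finset.sum_congr rfl fun j _ => hin' j
  exact Nat.add_left_cancel hbalance

variable {k : ℕ} {v : Fin k → V}

namespace IsFeasibleFlow

theorem splitFlow_le_one (hf : IsFeasibleFlow E τ k v f) (hx : x ≠ τ) :
    splitFlow E τ f x ≤ 1 := by
  rw [splitFlow, dif_pos hx]
  exact hf.1 x hx

theorem splitFlow_eq_sum_arcFlow_add (hf : IsFeasibleFlow E τ k v f) (hy : y ≠ τ) :
    splitFlow E τ f y = (∑ x, arcFlow E τ f x y) + (if ∃ s, v s = y then 1 else 0) := by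
  simpa only [arcFlow_of_ne hy] using hf.2.1 y hy

theorem sum_arcFlow_eq_splitFlow (hf : IsFeasibleFlow E τ k v f) (hx : x ≠ τ) :
    ∑ y, arcFlow E τ f x y = splitFlow E τ f x := by
  rw [sum_arcFlow, hf.2.2.1 x hx]

theorem splitFlow_ne_zero_iff (hf : IsFeasibleFlow E τ k v f) (hx : x ≠ τ) :
    splitFlow E τ f x ≠ 0 ↔ ∃ y, arcFlow E τ f x y ≠ 0 := by
  simp [← hf.sum_arcFlow_eq_splitFlow hx]

theorem injective (hf : IsFeasibleFlow E τ k v f) (hv : ∀ s, v s ≠ τ) :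
    Function.Injective v := by
  have hcard := (sum_sinkFlow_eq_card_image hv hf.2.1 hf.2.2.1).symm.trans hf.2.2.2
  simpa using Finset.card_image_iff.1 (hcard.trans (Finset.card_fin k).symm)

theorem sum_arcFlow_right_le_one (hf : IsFeasibleFlow E τ k v f) (hx : x ≠ τ) :
    ∑ y, arcFlow E τ f x y ≤ 1 :=
  (hf.sum_arcFlow_eq_splitFlow hx).trans_le (hf.splitFlow_le_one hx)

theorem sum_arcFlow_left_le_one (hf : IsFeasibleFlow E τ k v f) (hy : y ≠ τ) :
    ∑ x, arcFlow E τ f x y ≤ 1 :=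
  (Nat.le_add_right _ _).trans
    ((hf.splitFlow_eq_sum_arcFlow_add hy).symm.trans_le (hf.splitFlow_le_one hy))

theorem isUnitFlow (hf : IsFeasibleFlow E τ k v f) (hv : ∀ s, v s ≠ τ) :
    IsUnitFlow (Set.range v) τ (fun x y => arcFlow E τ f x y ≠ 0) where
  rightUnique x y z hy hz :=
    (Finset.sum_le_one_iff.1 (hf.sum_arcFlow_right_le_one (rel_of_arcFlow_ne_zero hy).2) y z
      (Finset.mem_univ _) (Finset.mem_univ _) hy hz).1
  left_unique x y z hz hx hy :=
    (Finset.sum_le_one_iff.1 (hf.sum_arcFlow_left_le_one hz) x y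
      (Finset.mem_univ _) (Finset.mem_univ _) hx hy).1
  not_rel_end y h := (rel_of_arcFlow_ne_zero h).2 rfl
  exists_rel_of_source := by
    rintro _ ⟨s, rfl⟩
    rw [← hf.splitFlow_ne_zero_iff (hv s), hf.splitFlow_eq_sum_arcFlow_add (hv s)]
    simp
  exists_rel_left_iff y hy := by
    have hle := hf.splitFlow_le_one hy
    have hin : (∃ x, arcFlow E τ f x y ≠ 0) ↔ ∑ x, arcFlow E τ f x y ≠ 0 := by simp
    rw [← hf.splitFlow_ne_zero_iff hy, hin, Set.mem_range]
    rw [hf.splitFlow_eq_sum_arcFlow_add hy] at hle ⊢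
    split_ifs at hle ⊢ <;> simp_all

theorem arcFlow_le_one (hf : IsFeasibleFlow E τ k v f) : arcFlow E τ f x y ≤ 1 := by
  by_cases h : arcFlow E τ f x y = 0
  · simp [h]
  · exact (Finset.single_le_sum (fun _ _ => Nat.zero_le _) (Finset.mem_univ y)).trans
      (hf.sum_arcFlow_right_le_one (rel_of_arcFlow_ne_zero h).2)

theorem isIndicatorFlow (hf : IsFeasibleFlow E τ k v f) :
    IsIndicatorFlow (fun x y => arcFlow E τ f x y ≠ 0) f where
  le_rel _ _ h := (rel_of_arcFlow_ne_zero h).1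
  split i hi := by
    have hle := hf.splitFlow_le_one hi
    have hsplit : splitFlow E τ f i = f (.split i hi) := dif_pos hi
    rw [← hf.splitFlow_ne_zero_iff hi, ← hsplit]
    split_ifs <;> omega
  move i j hij hi hj := by
    have hmove : arcFlow E τ f i j = f (.move i j hij hi hj) := by
      rw [arcFlow_of_ne hj, moveFlow, dif_pos ⟨hij, hi, hj⟩]
    have hle := hf.arcFlow_le_one (x := i) (y := j)
    rw [← hmove]
    split_ifs <;> omega
  toSink i hiτ hi := by
    have hsink : arcFlow E τ f i τ = f (.toSink i hiτ hi) := by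
      rw [arcFlow_end, sinkFlow, dif_pos ⟨hiτ, hi⟩]
    have hle := hf.arcFlow_le_one (x := i) (y := τ)
    rw [← hsink]
    split_ifs <;> omega

end IsFeasibleFlow

theorem IsUnitFlow.isFeasibleFlow {F : V → V → Prop} (hF : IsUnitFlow (Set.range v) τ F)
    (hf : IsIndicatorFlow F f) (hinj : Function.Injective v) : IsFeasibleFlow E τ k v f := by
  have hv (s : Fin k) : v s ≠ τ :=
    (hF.exists_rel_of_source (v s) ⟨s, rfl⟩).elim fun _ => hF.ne_end
  have harc (x y : V) : arcFlow E τ f x y = if F x y then 1 else 0 := hf.arcFlow_eq hF.not_rel_end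
  have hin (j : V) (hj : j ≠ τ) : splitFlow E τ f j =
      (∑ i, moveFlow E τ f i j) + (if ∃ s, v s = j then 1 else 0) := by
    have hsource : (∃ s, v s = j) → ∃ y, F j y := hF.exists_rel_of_source j
    simp only [← arcFlow_of_ne hj, harc]
    rw [Fintype.sum_ite_eq_ite_exists _ fun x y => hF.left_unique hj, hf.splitFlow_eq hj]
    simp only [hF.exists_rel_left_iff j hj, Set.mem_range]
    split_ifs <;> simp_all
  have hout (i : V) (hi : i ≠ τ) :
      (∑ j, moveFlow E τ f i j) + sinkFlow E τ f i = splitFlow E τ f i := by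
    rw [← sum_arcFlow, hf.splitFlow_eq hi]
    simp only [harc]
    convert Fintype.sum_ite_eq_ite_exists (F i) (fun _ _ h h' => hF.rightUnique h h') 1
  refine ⟨fun i hi => ?_, hin, hout, ?_⟩
  · rw [hf.split]
    split_ifs <;> simp
  · rw [sum_sinkFlow_eq_card_image hv hin hout, Finset.card_image_of_injective _ hinj,
      Finset.card_fin]

end SplitNetwork

theorem isFeasibleFlow_iff_paths_general {V : Type*} [Fintype V] (E : V → V → Prop)
    (hacyc : Std.Irrefl (Relation.TransGen E)) (τ : V) (k : ℕ) (v : Fin k → V)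
    (hvτ : ∀ s, v s ≠ τ) (f : SplitArc V E τ → ℕ) :
    IsFeasibleFlow E τ k v f ↔
      ∃ p : Fin k → List V,
        (∀ s, IsPathTo E (v s) τ (p s)) ∧
        (∀ s t : Fin k, s ≠ t → ∀ x : V, x ∈ p s → x ∈ p t → x = τ) ∧
        (∀ (i : V) (hi : i ≠ τ),
          f (.split i hi) = if ∃ s, i ∈ p s then 1 else 0) ∧
        (∀ (i j : V) (hij : E i j) (hi : i ≠ τ) (hj : j ≠ τ),
          f (.move i j hij hi hj) = if ∃ s, [i, j] <:+: p s then 1 else 0) ∧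
        (∀ (i : V) (hiτ : E i τ) (hi : i ≠ τ),
          f (.toSink i hiτ hi) = if ∃ s, [i, τ] <:+: p s then 1 else 0) := by
  constructor
  · intro hf
    have hind := hf.isIndicatorFlow
    obtain ⟨p, hpF, hparc⟩ := (hf.isUnitFlow hvτ).exists_isPathSystem (hf.injective hvτ)
      (irrefl_transGen_of_le hind.le_rel hacyc)
    rw [← hparc] at hpF hind
    have hp := hpF.mono hind.le_rel
    exact ⟨p, hp.isPathTo, hp.eq_end_of_mem, hp.isIndicatorFlow_iff.1 hind⟩
  · rintro ⟨p, hpath, hdisj, hind⟩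
    have hp : IsPathSystem E τ v p := ⟨hpath, hdisj⟩
    exact (hp.isUnitFlow hacyc hvτ).isFeasibleFlow (hp.isIndicatorFlow_iff.2 hind)
      (hp.injective_of_ne_end hvτ)

/-- Observation 1: the feasible integer flows of the split network are exactly the
indicator flows of systems of `k` directed paths `p s` from `v s` to `τ` whose vertex
sets are pairwise disjoint apart from the common endpoint `τ`. -/
theorem isFeasibleFlow_iff_paths {V : Type*} [Fintype V] (E : V → V → Prop)
    (hacyc : Irreflexive (Relation.TransGen E))
    (τ : V) (hτ : ∀ j : V, ¬ E τ j)
    (k : ℕ) (v : Fin k → V) (hinj : Function.Injective v) (hvτ : ∀ s, v s ≠ τ)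
    (f : SplitArc V E τ → ℕ) :
    IsFeasibleFlow E τ k v f ↔
      ∃ p : Fin k → List V,
        (∀ s, IsPathTo E (v s) τ (p s)) ∧
        (∀ s t : Fin k, s ≠ t → ∀ x : V, x ∈ p s → x ∈ p t → x = τ) ∧
        (∀ (i : V) (hi : i ≠ τ),
          f (.split i hi) = if ∃ s, i ∈ p s then 1 else 0) ∧
        (∀ (i j : V) (hij : E i j) (hi : i ≠ τ) (hj : j ≠ τ),
          f (.move i j hij hi hj) = if ∃ s, [i, j] <:+: p s then 1 else 0) ∧
        (∀ (i : V) (hiτ : E i τ) (hi : i ≠ τ),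
          f (.toSink i hiτ hi) = if ∃ s, [i, τ] <:+: p s then 1 else 0) :=
  isFeasibleFlow_iff_paths_general E ⟨hacyc⟩ τ k v hvτ f
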